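/- In K(2) the identity 3·z(6,{1,2}) = z(5,{1})·z(2,{2}) + z(4,{1})·z(3,{2}) holds. -/

import Mathlib

/-!
Write `x₀, x₁, x₂` for the images of the variables in `A`, and `aᵢ`, `bᵢ` for the degree-one
generators of the first and second exterior factor. The first two relations of `J` give
`xᵢ² + xᵢxⱼ + xⱼ² = 0` for `i ≠ j` (`mkA_sq_add_mul_add_sq`). The right-hand side expands to
`∑ᵢⱼ xᵢ³(xᵢxⱼ + xⱼ²) aᵢbⱼ`, whose coefficient is therefore `-xᵢ⁵` for `i ≠ j`, while it is `2xᵢ⁵`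
for `i = j`. Hence it equals `3 ∑ᵢ xᵢ⁵ aᵢbᵢ - ∑ᵢ xᵢ⁵ aᵢ(b₀ + b₁ + b₂)`, and the last sum vanishes
by the relation `b₀ + b₁ + b₂ = 0` (`eGen_sum`).

The computation is carried out in `A ⊗ E` for an arbitrary commutative `ℚ`-algebra `A` and an
arbitrary `ℚ`-algebra `E` (`tensor_identity`); elements of `A` have even degree, so the ordinary
tensor product involves no Koszul signs.
-/

set_option synthInstance.maxHeartbeats 1000000
set_option maxHeartbeats 1000000

open MvPolynomial
open scoped TensorProduct

noncomputable section

abbrev P3 : Type := MvPolynomial (Fin 3) ℚ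

def Jid : Ideal P3 :=
  Ideal.span {X 0 + X 1 + X 2, X 0 ^ 2 + X 1 ^ 2 + X 2 ^ 2, X 0 ^ 6 + X 1 ^ 6 + X 2 ^ 6}

abbrev Aq : Type := P3 ⧸ Jid

def mkA : P3 →ₐ[ℚ] Aq := Ideal.Quotient.mkₐ ℚ Jid

lemma rename_sum_pow (σ : Equiv.Perm (Fin 3)) (k : ℕ) :
    rename σ ((X 0 : P3) ^ k + X 1 ^ k + X 2 ^ k) = (X 0 : P3) ^ k + X 1 ^ k + X 2 ^ k := by
  have h : ((X 0 : P3) ^ k + X 1 ^ k + X 2 ^ k) = ∑ i, (X i : P3) ^ k := by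
    simp [Fin.sum_univ_three]
  rw [h, map_sum]
  simp only [map_pow, rename_X]
  exact Fintype.sum_equiv σ _ _ fun i => rfl

lemma rename_mem_J (σ : Equiv.Perm (Fin 3)) {p : P3} (hp : p ∈ Jid) :
    rename σ p ∈ Jid := by
  have hle : Jid.map (rename σ : P3 →ₐ[ℚ] P3).toRingHom ≤ Jid := by
    rw [Jid, Ideal.map_span, Ideal.span_le]
    rintro q ⟨r, hr, rfl⟩
    simp only [Set.mem_insert_iff, Set.mem_singleton_iff] at hr
    have h1 := rename_sum_pow σ 1
    simp only [pow_one] at h1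
    rcases hr with rfl | rfl | rfl
    · exact Ideal.subset_span (by simp only [AlgHom.toRingHom_eq_coe, RingHom.coe_coe, h1]; left; rfl)
    · exact Ideal.subset_span (by
        simp only [AlgHom.toRingHom_eq_coe, RingHom.coe_coe, rename_sum_pow σ 2]
        right; left; rfl)
    · exact Ideal.subset_span (by
        simp only [AlgHom.toRingHom_eq_coe, RingHom.coe_coe, rename_sum_pow σ 6]
        right; right; rfl)
  exact hle (Ideal.mem_map_of_mem _ hp)

def permAq (σ : Equiv.Perm (Fin 3)) : Aq →ₐ[ℚ] Aq :=
  Ideal.Quotient.liftₐ Jid (mkA.comp (rename σ)) (fun p hp => by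
    simp only [AlgHom.comp_apply, mkA, Ideal.Quotient.mkₐ_eq_mk]
    exact Ideal.Quotient.eq_zero_iff_mem.mpr (rename_mem_J σ hp))

def negP : P3 →ₐ[ℚ] P3 := aeval (fun i => -X i)

lemma negP_mem_J {p : P3} (hp : p ∈ Jid) : negP p ∈ Jid := by
  have hle : Jid.map negP.toRingHom ≤ Jid := by
    rw [Jid, Ideal.map_span, Ideal.span_le]
    rintro q ⟨r, hr, rfl⟩
    simp only [Set.mem_insert_iff, Set.mem_singleton_iff] at hr
    rcases hr with rfl | rfl | rfl
    · have : negP ((X 0 : P3) + X 1 + X 2) = -(X 0 + X 1 + X 2) := by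
        simp [negP]; try ring
      simp only [AlgHom.toRingHom_eq_coe, RingHom.coe_coe, this]
      exact neg_mem (Ideal.subset_span (by left; rfl))
    · have : negP ((X 0 : P3) ^ 2 + X 1 ^ 2 + X 2 ^ 2) = X 0 ^ 2 + X 1 ^ 2 + X 2 ^ 2 := by
        simp [negP]; try ring
      simp only [AlgHom.toRingHom_eq_coe, RingHom.coe_coe, this]
      exact Ideal.subset_span (by right; left; rfl)
    · have : negP ((X 0 : P3) ^ 6 + X 1 ^ 6 + X 2 ^ 6) = X 0 ^ 6 + X 1 ^ 6 + X 2 ^ 6 := by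
        simp [negP]; try ring
      simp only [AlgHom.toRingHom_eq_coe, RingHom.coe_coe, this]
      exact Ideal.subset_span (by right; right; rfl)
  exact hle (Ideal.mem_map_of_mem _ hp)

def negAq : Aq →ₐ[ℚ] Aq :=
  Ideal.Quotient.liftₐ Jid (mkA.comp negP) (fun p hp => by
    simp only [AlgHom.comp_apply, mkA, Ideal.Quotient.mkₐ_eq_mk]
    exact Ideal.Quotient.eq_zero_iff_mem.mpr (negP_mem_J hp))

def Vsub : Submodule ℚ (Fin 3 → ℚ) := Submodule.span ℚ {fun _ => (1 : ℚ)}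

abbrev Vq : Type := (Fin 3 → ℚ) ⧸ Vsub

def vGen (i : Fin 3) : Vq := Submodule.Quotient.mk (Pi.single i 1)

abbrev Em (m : ℕ) : Type := ExteriorAlgebra ℚ (Fin m → Vq)

def eGen (m : ℕ) (j : Fin m) (i : Fin 3) : Em m :=
  ExteriorAlgebra.ι ℚ (Pi.single j (vGen i))

def prodGen (m : ℕ) (i : Fin 3) (I : Finset (Fin m)) : Em m :=
  ((I.sort (· ≤ ·)).map (fun j => eGen m j i)).prod

def extHom {m : ℕ} (g : (Fin m → Vq) →ₗ[ℚ] (Fin m → Vq)) : Em m →ₐ[ℚ] Em m :=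
  ExteriorAlgebra.lift ℚ ⟨(ExteriorAlgebra.ι ℚ).comp g, fun v => by
    simpa using ExteriorAlgebra.ι_sq_zero (g v)⟩

def permV (σ : Equiv.Perm (Fin 3)) : Vq →ₗ[ℚ] Vq :=
  Submodule.mapQ Vsub Vsub (LinearMap.funLeft ℚ ℚ ⇑σ⁻¹) (by
    rw [Vsub, Submodule.span_le]
    rintro v rfl
    exact Submodule.mem_comap.mpr (Submodule.subset_span rfl))

abbrev Kk (m : ℕ) : Type := Aq ⊗[ℚ] Em m

def zz (m : ℕ) (d : ℕ) (I : Finset (Fin m)) : Kk m :=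
  mkA (X 0 ^ d) ⊗ₜ[ℚ] prodGen m 0 I + mkA (X 1 ^ d) ⊗ₜ[ℚ] prodGen m 1 I +
    mkA (X 2 ^ d) ⊗ₜ[ℚ] prodGen m 2 I

def zS (m : ℕ) (i : ℕ) (I : Finset (Fin m)) : Kk m := zz m (i - 1) I

lemma vGen_sum : vGen 0 + vGen 1 + vGen 2 = 0 := by
  have h : (Pi.single 0 1 + Pi.single 1 1 + Pi.single 2 1 : Fin 3 → ℚ) = fun _ => 1 := by
    funext i
    fin_cases i <;> simp
  have h2 : vGen 0 + vGen 1 + vGen 2 = Submodule.Quotient.mk (p := Vsub)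
      (Pi.single 0 1 + Pi.single 1 1 + Pi.single 2 1 : Fin 3 → ℚ) := rfl
  rw [h2, h, Submodule.Quotient.mk_eq_zero]
  exact Submodule.subset_span rfl

lemma eGen_sum (m : ℕ) (j : Fin m) : eGen m j 0 + eGen m j 1 + eGen m j 2 = 0 := by
  simp only [eGen]
  rw [← map_add, ← map_add, ← Pi.single_add, ← Pi.single_add, vGen_sum, Pi.single_zero, map_zero]

lemma mkA_sum : mkA (X 0) + mkA (X 1) + mkA (X 2) = 0 := by
  rw [← map_add, ← map_add]
  exact Ideal.Quotient.eq_zero_iff_mem.mpr (Ideal.subset_span (Or.inl rfl))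

lemma mkA_sum_sq : mkA (X 0) ^ 2 + mkA (X 1) ^ 2 + mkA (X 2) ^ 2 = 0 := by
  simp only [← map_pow, ← map_add]
  exact Ideal.Quotient.eq_zero_iff_mem.mpr (Ideal.subset_span (Or.inr (Or.inl rfl)))

/-- If the first two power sums of `a, b, c` vanish, then so does `a² + ab + b²`: twice it is
`p₂ + p₁(a + b - c)`. -/
lemma sq_add_mul_add_sq_of_sums {a b c : Aq} (h1 : a + b + c = 0) (h2 : a ^ 2 + b ^ 2 + c ^ 2 = 0) :
    a ^ 2 + a * b + b ^ 2 = 0 := by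
  have h : (2 : ℚ) • (a ^ 2 + a * b + b ^ 2) = 0 := by
    rw [show (2 : ℚ) = 1 + 1 by norm_num, add_smul, one_smul]
    linear_combination h2 + (a + b - c) * h1
  exact (smul_eq_zero.mp h).resolve_left (by norm_num)

lemma mkA_sq_add_mul_add_sq (i j : Fin 3) (hij : i ≠ j) :
    mkA (X i) ^ 2 + mkA (X i) * mkA (X j) + mkA (X j) ^ 2 = 0 := by
  have h1 := mkA_sum
  have h2 := mkA_sum_sq
  -- the third index, over which the power sums are completed
  obtain ⟨k, hk⟩ : ∃ k, ∀ f : Fin 3 → Aq, f i + f j + f k = f 0 + f 1 + f 2 := by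
    fin_cases i <;> fin_cases j <;> first
      | exact absurd rfl hij
      | (refine ⟨0, fun f => ?_⟩; dsimp <;> ring1)
      | (refine ⟨1, fun f => ?_⟩; dsimp <;> ring1)
      | (refine ⟨2, fun f => ?_⟩; dsimp <;> ring1)
  exact sq_add_mul_add_sq_of_sums ((hk fun i => mkA (X i)).trans h1)
    ((hk fun i => mkA (X i) ^ 2).trans h2)

/-- The identity in `A ⊗ E`, for families satisfying the relations that hold in `K(2)`. -/
lemma tensor_identity {A E : Type*} [CommRing A] [Ring E] [Algebra ℚ A] [Algebra ℚ E]
    (x : Fin 3 → A) (a b : Fin 3 → E)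
    (hx : ∀ i j, i ≠ j → x i ^ 2 + x i * x j + x j ^ 2 = 0) (hb : b 0 + b 1 + b 2 = 0) :
    (3 : A ⊗[ℚ] E) * ((x 0 ^ 5) ⊗ₜ[ℚ] (a 0 * b 0) + (x 1 ^ 5) ⊗ₜ[ℚ] (a 1 * b 1)
        + (x 2 ^ 5) ⊗ₜ[ℚ] (a 2 * b 2)) =
      ((x 0 ^ 4) ⊗ₜ[ℚ] a 0 + (x 1 ^ 4) ⊗ₜ[ℚ] a 1 + (x 2 ^ 4) ⊗ₜ[ℚ] a 2)
          * ((x 0 ^ 1) ⊗ₜ[ℚ] b 0 + (x 1 ^ 1) ⊗ₜ[ℚ] b 1 + (x 2 ^ 1) ⊗ₜ[ℚ] b 2)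
        + ((x 0 ^ 3) ⊗ₜ[ℚ] a 0 + (x 1 ^ 3) ⊗ₜ[ℚ] a 1 + (x 2 ^ 3) ⊗ₜ[ℚ] a 2)
          * ((x 0 ^ 2) ⊗ₜ[ℚ] b 0 + (x 1 ^ 2) ⊗ₜ[ℚ] b 1 + (x 2 ^ 2) ⊗ₜ[ℚ] b 2) := by
  have off (i j : Fin 3) (hij : i ≠ j) :
      (x i ^ 4 * x j ^ 1) ⊗ₜ[ℚ] (a i * b j) + (x i ^ 3 * x j ^ 2) ⊗ₜ[ℚ] (a i * b j)
        = -((x i ^ 5) ⊗ₜ[ℚ] (a i * b j)) := by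
    rw [← TensorProduct.add_tmul, ← TensorProduct.neg_tmul]
    congr 1
    linear_combination x i ^ 3 * hx i j hij
  have diag (i : Fin 3) :
      (x i ^ 4 * x i ^ 1) ⊗ₜ[ℚ] (a i * b i) + (x i ^ 3 * x i ^ 2) ⊗ₜ[ℚ] (a i * b i)
        = (x i ^ 5) ⊗ₜ[ℚ] (a i * b i) + (x i ^ 5) ⊗ₜ[ℚ] (a i * b i) := by
    rw [← pow_add, ← pow_add]
  have rel (i : Fin 3) :
      (x i ^ 5) ⊗ₜ[ℚ] (a i * b 0) + (x i ^ 5) ⊗ₜ[ℚ] (a i * b 1) + (x i ^ 5) ⊗ₜ[ℚ] (a i * b 2)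
        = 0 := by
    rw [← TensorProduct.tmul_add, ← TensorProduct.tmul_add, ← mul_add, ← mul_add, hb,
      mul_zero, TensorProduct.tmul_zero]
  have three (t : A ⊗[ℚ] E) : 3 * t = t + t + t := by
    rw [show (3 : A ⊗[ℚ] E) = 1 + 1 + 1 by norm_num, add_mul, add_mul, one_mul]
  simp only [three, mul_add, add_mul, Algebra.TensorProduct.tmul_mul_tmul]
  linear_combination (norm := abel) rel 0 + rel 1 + rel 2 - diag 0 - diag 1 - diag 2
    - off 0 1 (by decide) - off 0 2 (by decide) - off 1 0 (by decide) - off 1 2 (by decide)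
    - off 2 0 (by decide) - off 2 1 (by decide)

lemma prodGen_singleton (i : Fin 3) (j : Fin 2) : prodGen 2 i {j} = eGen 2 j i := by
  simp [prodGen]

lemma prodGen_pair (i : Fin 3) : prodGen 2 i {0, 1} = eGen 2 0 i * eGen 2 1 i := by
  have h : ({0, 1} : Finset (Fin 2)).sort (· ≤ ·) = [0, 1] := by
    rw [Finset.sort_insert _ (by simp) (by simp), Finset.sort_singleton]
  simp [prodGen, h]

/-- In `K(2)` (indices shifted: the paper's `{1,2}` is `{0,1}` here):
`3·z(6,{1,2}) = z(5,{1})·z(2,{2}) + z(4,{1})·z(3,{2})`. -/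
theorem three_z6_identity :
    3 * zS 2 6 {0, 1} = zS 2 5 {0} * zS 2 2 {1} + zS 2 4 {0} * zS 2 3 {1} := by
  simp only [zS, zz, prodGen_singleton, prodGen_pair, Nat.add_one_sub_one, map_pow]
  exact tensor_identity (fun i => mkA (X i)) (eGen 2 0) (eGen 2 1) mkA_sq_add_mul_add_sq
    (eGen_sum 2 1)

end
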